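/- arXiv:1303.5958 — 4 statements merged into one kernel-verified Lean document; each statement's English description precedes it below -/
import Mathlib

section
/- Let f_1, …, f_n : ℝ → ℝ (n ≥ 2) be affine functions f_k(x) = a_k·x + b_k with pairwise distinct slopes a_1, …, a_n. Suppose i ≠ j and x_0 ∈ ℝ satisfy f_i(x_0) = f_j(x_0), and for every other pair k ≠ l with {k,l} ≠ {i,j}, the x-coordinate of the intersection point of the graphs of f_k and f_l is strictly less than x_0. Then there is no index k ∉ {i,j} whose slope a_k lies strictly between a_i and a_j. (In other words, the rightmost vertex of an arrangement of pairwise non-parallel, non-vertical lines is the intersection of two lines that are consecutive in slope order.) -/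
/-- The rightmost vertex of an arrangement of pairwise non-parallel, non-vertical
lines is the intersection of two lines that are consecutive in slope order:
if the lines `f_i`, `f_j` meet at abscissa `x0` and every other pair of lines
meets strictly to the left of `x0`, then no third slope lies strictly between
the slopes of `f_i` and `f_j`. -/
theorem rightmost_vertex_consecutive_slopes
    (n : ℕ) (hn : 2 ≤ n) (a b : Fin n → ℝ)
    (ha : Function.Injective a)
    (i j : Fin n) (hij : i ≠ j) (x0 : ℝ)
    (hmeet : a i * x0 + b i = a j * x0 + b j)
    (hleft : ∀ k l : Fin n, k ≠ l → ({k, l} : Set (Fin n)) ≠ {i, j} →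
      (b l - b k) / (a k - a l) < x0) :
    ¬ ∃ k : Fin n, k ≠ i ∧ k ≠ j ∧
      ((a i < a k ∧ a k < a j) ∨ (a j < a k ∧ a k < a i)) := by
  rintro ⟨k, hki, hkj, h⟩
  have hs1 : ∀ l : Fin n, ({k, l} : Set (Fin n)) ≠ {i, j} := by
    intro l he
    have hk : k ∈ ({i, j} : Set (Fin n)) := he ▸ (by simp)
    rcases hk with hk | hk
    · exact hki hk
    · exact hkj hk
  have hs2 : ∀ l : Fin n, ({l, k} : Set (Fin n)) ≠ {i, j} := by
    intro l he
    exact hs1 l (by rw [Set.pair_comm]; exact he)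
  rcases h with ⟨h1, h2⟩ | ⟨h1, h2⟩
  · have e1 := hleft k i hki (hs1 i)
    have e2 := hleft j k hkj.symm (hs2 j)
    rw [div_lt_iff₀ (by linarith)] at e1 e2
    linarith
  · have e1 := hleft k j hkj (hs1 j)
    have e2 := hleft i k hki.symm (hs2 i)
    rw [div_lt_iff₀ (by linarith)] at e1 e2
    linarith
end

section
/- Let w ≥ 1 be an integer. Consider four lines in ℝ², each given as { s + t·v : t ∈ ℝ } where s ∈ ℤ² and v ∈ ℤ² with every coordinate of v of absolute value at most 2^{w−1}. Suppose the first and second lines have nonzero direction determinant and intersect in the point χ, and the third and fourth lines have nonzero direction determinant and intersect in the point χ′. If χ ≠ χ′, then ‖χ − χ′‖ ≥ 2^{2−4w}; in particular, any two distinct crossing points in an arrangement of such lines are at distance at least 2^{2−4w} from each other. -/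
/-- `p` lies on the line through the integer point `s` with integer
direction vector `v`, in the Euclidean plane. -/
def OnIntLine2 (s v : ℤ × ℤ) (p : EuclideanSpace ℝ (Fin 2)) : Prop :=
  ∃ t : ℝ, p 0 = (s.1 : ℝ) + t * (v.1 : ℝ) ∧ p 1 = (s.2 : ℝ) + t * (v.2 : ℝ)

theorem cps_int_mul (s t v u : ℤ × ℤ) (p : EuclideanSpace ℝ (Fin 2))
    (h1 : OnIntLine2 s v p) (h2 : OnIntLine2 t u p) (i : Fin 2) :
    ∃ n : ℤ, ((v.1 * u.2 - v.2 * u.1 : ℤ) : ℝ) * p i = n := by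
  obtain ⟨a, ha0, ha1⟩ := h1
  obtain ⟨b, hb0, hb1⟩ := h2
  have e1 : p 0 * v.2 - p 1 * v.1 = s.1 * v.2 - s.2 * v.1 := by
    rw [ha0, ha1]; ring
  have e2 : p 0 * u.2 - p 1 * u.1 = t.1 * u.2 - t.2 * u.1 := by
    rw [hb0, hb1]; ring
  fin_cases i
  · refine ⟨(t.1 * u.2 - t.2 * u.1) * v.1 - (s.1 * v.2 - s.2 * v.1) * u.1, ?_⟩
    push_cast
    show _ * p 0 = _
    linear_combination (v.1 : ℝ) * e2 - (u.1 : ℝ) * e1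
  · refine ⟨(t.1 * u.2 - t.2 * u.1) * v.2 - (s.1 * v.2 - s.2 * v.1) * u.2, ?_⟩
    push_cast
    show _ * p 1 = _
    linear_combination (v.2 : ℝ) * e2 - (u.2 : ℝ) * e1

theorem cps_det_bound (B : ℤ) (v u : ℤ × ℤ)
    (hv : |v.1| ≤ B ∧ |v.2| ≤ B) (hu : |u.1| ≤ B ∧ |u.2| ≤ B) :
    |v.1 * u.2 - v.2 * u.1| ≤ 2 * (B * B) := by
  have hB : 0 ≤ B := (abs_nonneg _).trans hv.1
  have h1 : |v.1 * u.2| ≤ B * B := by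
    rw [abs_mul]; exact mul_le_mul hv.1 hu.2 (abs_nonneg _) hB
  have h2 : |v.2 * u.1| ≤ B * B := by
    rw [abs_mul]; exact mul_le_mul hv.2 hu.1 (abs_nonneg _) hB
  have := abs_sub (v.1 * u.2) (v.2 * u.1)
  linarith

/-- Any two distinct crossing points in an arrangement of lines with integer
starting points and integer direction vectors whose coordinates have absolute
value at most `2^(w-1)` are at Euclidean distance at least `2^(2-4w)`. -/
theorem crossing_points_separation
    (w : ℕ) (hw : 1 ≤ w)
    (s1 s2 s3 s4 v1 v2 v3 v4 : ℤ × ℤ)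
    (hb1 : |v1.1| ≤ 2 ^ (w - 1) ∧ |v1.2| ≤ 2 ^ (w - 1))
    (hb2 : |v2.1| ≤ 2 ^ (w - 1) ∧ |v2.2| ≤ 2 ^ (w - 1))
    (hb3 : |v3.1| ≤ 2 ^ (w - 1) ∧ |v3.2| ≤ 2 ^ (w - 1))
    (hb4 : |v4.1| ≤ 2 ^ (w - 1) ∧ |v4.2| ≤ 2 ^ (w - 1))
    (h12 : v1.1 * v2.2 - v1.2 * v2.1 ≠ 0)
    (h34 : v3.1 * v4.2 - v3.2 * v4.1 ≠ 0)
    (χ χ' : EuclideanSpace ℝ (Fin 2))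
    (hχ1 : OnIntLine2 s1 v1 χ) (hχ2 : OnIntLine2 s2 v2 χ)
    (hχ3 : OnIntLine2 s3 v3 χ') (hχ4 : OnIntLine2 s4 v4 χ')
    (hne : χ ≠ χ') :
    (2 : ℝ) ^ ((2 : ℤ) - 4 * (w : ℤ)) ≤ ‖χ - χ'‖ := by
  obtain ⟨i, hi⟩ : ∃ i, χ i ≠ χ' i := by
    by_contra! h
    exact hne (by ext i; exact h i)
  obtain ⟨n, hn⟩ := cps_int_mul s1 s2 v1 v2 χ hχ1 hχ2 i
  obtain ⟨m, hm⟩ := cps_int_mul s3 s4 v3 v4 χ' hχ3 hχ4 i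
  have hD := cps_det_bound _ v1 v2 hb1 hb2
  have hE := cps_det_bound _ v3 v4 hb3 hb4
  generalize v1.1 * v2.2 - v1.2 * v2.1 = D at *
  generalize v3.1 * v4.2 - v3.2 * v4.1 = E at *
  have hnorm : |χ i - χ' i| ≤ ‖χ - χ'‖ := by
    have := PiLp.norm_apply_le (χ - χ') i
    simpa using this
  refine le_trans ?_ hnorm
  have key : ((D * E : ℤ) : ℝ) * (χ i - χ' i) = ((E * n - D * m : ℤ) : ℝ) := by
    push_cast
    linear_combination (E : ℝ) * hn - (D : ℝ) * hm
  have hDE : D * E ≠ 0 := mul_ne_zero h12 h34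
  have hnz : E * n - D * m ≠ 0 := by
    intro h
    rw [h, Int.cast_zero] at key
    rcases mul_eq_zero.mp key with h | h
    · exact hDE (by exact_mod_cast h)
    · exact hi (sub_eq_zero.mp h)
  have h1 : (1 : ℝ) ≤ |((E * n - D * m : ℤ) : ℝ)| := by
    exact_mod_cast Int.one_le_abs hnz
  obtain ⟨k, rfl⟩ : ∃ k, w = k + 1 := ⟨w - 1, by omega⟩
  simp only [Nat.add_sub_cancel] at hD hE
  have h2 : |D * E| ≤ 2 ^ (4 * k + 2) := by
    rw [abs_mul]
    calc |D| * |E| ≤ (2 * (2 ^ k * 2 ^ k)) * (2 * (2 ^ k * 2 ^ k)) :=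
          mul_le_mul hD hE (abs_nonneg _) (by positivity)
      _ = 2 ^ (4 * k + 2) := by ring
  have h2' : |((D * E : ℤ) : ℝ)| ≤ 2 ^ (4 * k + 2) := by exact_mod_cast h2
  rw [← key, abs_mul] at h1
  have h3 : (1 : ℝ) ≤ 2 ^ (4 * k + 2) * |χ i - χ' i| :=
    h1.trans (mul_le_mul_of_nonneg_right h2' (abs_nonneg _))
  have h4 : (2 : ℝ) ^ ((2 : ℤ) - 4 * ((k + 1 : ℕ) : ℤ)) = ((2 : ℝ) ^ (4 * k + 2))⁻¹ := by
    rw [← zpow_natCast, ← zpow_neg]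
    congr 1
  rw [h4, inv_le_iff_one_le_mul₀' (by positivity)]
  exact h3
end

section
/- Let ρ be a real number with 1/2 ≤ ρ < 1. Let a_1 > a_2 > … > a_m be a strictly decreasing sequence of positive integers such that a_{j+1} ≤ ⌈ρ·a_j⌉ for every 1 ≤ j < m, and such that a_m ≥ 2. Then m ≤ log_{2/(1+ρ)}(a_1) + 2/(1−ρ) + 1. -/
/-- ρ-halving chain bound: for `1/2 ≤ ρ < 1`, if `a_1 > a_2 > … > a_m` are
positive integers with `a_{j+1} ≤ ⌈ρ · a_j⌉` for `1 ≤ j < m` and `a_m ≥ 2`,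
then `m ≤ log_{2/(1+ρ)}(a_1) + 2/(1-ρ) + 1`. -/
theorem rho_halving_chain_length_bound
    (ρ : ℝ) (hρ1 : 1 / 2 ≤ ρ) (hρ2 : ρ < 1)
    (m : ℕ) (hm : 1 ≤ m) (a : ℕ → ℕ)
    (hpos : ∀ j, 1 ≤ j → j ≤ m → 0 < a j)
    (hdec : ∀ j, 1 ≤ j → j < m → a (j + 1) < a j)
    (hhalf : ∀ j, 1 ≤ j → j < m → (a (j + 1) : ℤ) ≤ ⌈ρ * (a j : ℝ)⌉)
    (hlast : 2 ≤ a m) :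
    (m : ℝ) ≤ Real.logb (2 / (1 + ρ)) (a 1 : ℝ) + 2 / (1 - ρ) + 1 := by
  have hb : 1 < 2 / (1 + ρ) := by
    rw [lt_div_iff₀ (by linarith)]; linarith
  have hT : 0 < 2 / (1 - ρ) := div_pos two_pos (by linarith)
  have key : ∀ n j : ℕ, 1 ≤ j → j + n = m → n + 2 ≤ a j ∧
      (n : ℝ) ≤ Real.logb (2 / (1 + ρ)) (a j : ℝ) + 2 / (1 - ρ) := by
    intro n
    induction n with
    | zero =>
      intro j hj hjm
      have hjm' : j = m := by omega
      subst hjm'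
      refine ⟨by omega, ?_⟩
      have h1 : (1 : ℝ) ≤ a j := by exact_mod_cast (by omega : 1 ≤ a j)
      have := Real.logb_nonneg hb h1
      push_cast
      linarith
    | succ n ih =>
      intro j hj hjm
      obtain ⟨h1, h2⟩ := ih (j + 1) (by omega) (by omega)
      have hd := hdec j hj (by omega)
      have hh := hhalf j hj (by omega)
      have hn : n + 1 + 2 ≤ a j := by omega
      refine ⟨hn, ?_⟩
      have hnR : (n : ℝ) + 1 + 2 ≤ a j := by exact_mod_cast hn
      have hn0 : (0 : ℝ) ≤ n := Nat.cast_nonneg n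
      push_cast
      by_cases hc : (a j : ℝ) < 2 / (1 - ρ)
      · have := Real.logb_nonneg hb (by linarith : (1 : ℝ) ≤ a j)
        linarith
      · have hc' : 2 ≤ (a j : ℝ) * (1 - ρ) := by
          rw [← div_le_iff₀ (by linarith)]; linarith
        have hceil := Int.ceil_lt_add_one (ρ * (a j : ℝ))
        have hhR : (a (j + 1) : ℝ) ≤ (⌈ρ * (a j : ℝ)⌉ : ℝ) := by exact_mod_cast hh
        have hp : (0 : ℝ) < a (j + 1) := by exact_mod_cast (by omega : 0 < a (j + 1))
        have hle : (2 / (1 + ρ)) * (a (j + 1) : ℝ) ≤ a j := by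
          rw [div_mul_eq_mul_div, div_le_iff₀ (by linarith)]
          linarith
        have hl := Real.logb_le_logb_of_le hb (by positivity) hle
        rw [Real.logb_mul (by positivity) hp.ne',
          Real.logb_self_eq_one hb] at hl
        linarith
  have h := (key (m - 1) 1 le_rfl (by omega)).2
  rw [Nat.cast_sub hm] at h
  push_cast at h
  linarith
end

section
/- Let A_1, …, A_C be finite multisets of real numbers with total size N = |A_1| + … + |A_C| > 0. For each k, let m_k ∈ ℝ be a median of A_k, meaning that the number of elements of A_k that are ≤ m_k is at least |A_k|/2 and the number of elements of A_k that are ≥ m_k is at least |A_k|/2. Let h ∈ ℝ be a weighted median of the points m_1, …, m_C with weights |A_1|, …, |A_C|, meaning that the total weight of the indices k with m_k ≤ h is at least N/2 and the total weight of the indices k with m_k ≥ h is at least N/2. Then the number of elements of the combined multiset A_1 ∪ … ∪ A_C (with multiplicity) that are strictly less than h is at most (3/4)·N, and the number of elements strictly greater than h is at most (3/4)·N. -/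
theorem aux_card (s : Multiset ℝ) (p q : ℝ → Prop) [DecidablePred p] [DecidablePred q]
    (hpq : ∀ x, p x → ¬ q x) : (s.filter p).card + (s.filter q).card ≤ s.card := by
  have h1 := congrArg Multiset.card (Multiset.filter_add_not q s)
  rw [Multiset.card_add] at h1
  have h2 : (s.filter p).card ≤ (s.filter (fun x => ¬ q x)).card :=
    Multiset.card_le_card (Multiset.monotone_filter_right s hpq)
  omega

theorem aux_sum {C : ℕ} (c f : Fin C → ℕ) (P : Fin C → Prop) [DecidablePred P]
    (h1 : ∀ k, f k ≤ c k) (h2 : ∀ k, P k → 2 * f k ≤ c k)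
    (hw : ∑ k, c k ≤ 2 * ∑ k ∈ Finset.univ.filter P, c k) :
    4 * ∑ k, f k ≤ 3 * ∑ k, c k := by
  have key : ∑ k, (2 * f k + if P k then c k else 0) ≤ ∑ k, 2 * c k := by
    apply Finset.sum_le_sum
    intro k _
    have := h1 k
    have := h2 k
    split_ifs with hk
    · have := h2 k hk
      omega
    · omega
  rw [Finset.sum_add_distrib, ← Finset.mul_sum, ← Finset.mul_sum] at key
  rw [Finset.sum_filter] at hw
  omega

/-- The weighted median of group medians is a 3/4-halving point: at most
`(3/4)·N` elements of the combined multiset are strictly less than it, and at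
most `(3/4)·N` are strictly greater. Median and weighted-median conditions are
expressed by multiplying through by 2. -/
theorem weighted_median_of_medians_is_three_quarters_halving
    (C : ℕ) (A : Fin C → Multiset ℝ)
    (N : ℕ) (hN : N = ∑ k, (A k).card) (hNpos : 0 < N)
    (med : Fin C → ℝ)
    (hmedle : ∀ k, (A k).card ≤ 2 * ((A k).filter (fun x => x ≤ med k)).card)
    (hmedge : ∀ k, (A k).card ≤ 2 * ((A k).filter (fun x => med k ≤ x)).card)
    (h : ℝ)
    (hwle : N ≤ 2 * ∑ k ∈ Finset.univ.filter (fun k => med k ≤ h), (A k).card)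
    (hwge : N ≤ 2 * ∑ k ∈ Finset.univ.filter (fun k => h ≤ med k), (A k).card) :
    4 * (∑ k, ((A k).filter (fun x => x < h)).card) ≤ 3 * N ∧
    4 * (∑ k, ((A k).filter (fun x => h < x)).card) ≤ 3 * N := by
  subst hN
  constructor
  · refine aux_sum _ _ (fun k => h ≤ med k) (fun k => Multiset.card_le_card (Multiset.filter_le _ _))
      (fun k hk => ?_) hwge
    have h1 := aux_card (A k) (fun x => x < h) (fun x => med k ≤ x)
      (fun x hx hy => absurd (hk.trans hy) (not_le.mpr hx))
    have h2 := hmedge k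
    omega
  · refine aux_sum _ _ (fun k => med k ≤ h) (fun k => Multiset.card_le_card (Multiset.filter_le _ _))
      (fun k hk => ?_) hwle
    have h1 := aux_card (A k) (fun x => h < x) (fun x => x ≤ med k)
      (fun x hx hy => absurd (hy.trans hk) (not_le.mpr hx))
    have h2 := hmedle k
    omega
end
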